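/- The cubic polynomial 6x^3 - 11√(π/2) x^2 + (6 + 2π) x - 5√(π/2) has exactly one real root, and this root lies in the interval (1.35, 1.36). -/

import Mathlib

open Real

/-- The cubic `6 x³ - 11 s x² + (6 + 4 s²) x - 5 s` is strictly increasing in `x` as soon as
`49 s² < 108`. -/
lemma strictMono_cubic_of_sq_lt {s : ℝ} (hs : 49 * s ^ 2 < 108) :
    StrictMono fun x : ℝ => 6 * x ^ 3 - 11 * s * x ^ 2 + (6 + 4 * s ^ 2) * x - 5 * s := by
  intro x y hxy
  have hq : 0 < 6 * (x ^ 2 + x * y + y ^ 2) - 11 * s * (x + y) + (6 + 4 * s ^ 2) := by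
    nlinarith [sq_nonneg (9 * (x + y) - 11 * s), sq_nonneg (x - y)]
  have := mul_pos (sub_pos.2 hxy) hq
  dsimp only
  linarith

/-- The cubic determining the critical wave number of the diffusion mode has exactly one real
root, which lies in `(1.35, 1.36)`. -/
theorem diffusion_mode_critical_cubic :
    (∃! x : ℝ, 6*x^3 - 11 * Real.sqrt (π/2) * x^2 + (6 + 2*π) * x - 5 * Real.sqrt (π/2) = 0) ∧
    (∀ x : ℝ, 6*x^3 - 11 * Real.sqrt (π/2) * x^2 + (6 + 2*π) * x - 5 * Real.sqrt (π/2) = 0 →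
      1.35 < x ∧ x < 1.36) := by
  have hπ_gt := Real.pi_gt_d4
  have hπ_lt := Real.pi_lt_d4
  have hs_gt : 1.2532 < √(π / 2) := Real.lt_sqrt_of_sq_lt (by linarith)
  have hs_lt : √(π / 2) < 1.2534 := (Real.sqrt_lt' (by norm_num)).2 (by linarith)
  have hs_sq : √(π / 2) ^ 2 = π / 2 := Real.sq_sqrt (by positivity)
  have hmono : StrictMono fun x : ℝ =>
      6*x^3 - 11 * Real.sqrt (π/2) * x^2 + (6 + 2*π) * x - 5 * Real.sqrt (π/2) := by
    have h := strictMono_cubic_of_sq_lt (s := √(π / 2)) (by linarith)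
    rwa [hs_sq, show 4 * (π / 2) = 2 * π by ring] at h
  set f : ℝ → ℝ := fun x =>
    6*x^3 - 11 * Real.sqrt (π/2) * x^2 + (6 + 2*π) * x - 5 * Real.sqrt (π/2) with hf
  have hf_left : f 1.35 < 0 := by
    simp only [hf]
    linarith
  have hf_right : 0 < f 1.36 := by
    simp only [hf]
    linarith
  have hcont : Continuous f := by fun_prop
  obtain ⟨x, -, hx⟩ := intermediate_value_Icc (by norm_num) hcont.continuousOn
    ⟨hf_left.le, hf_right.le⟩
  refine ⟨⟨x, hx, fun y hy => hmono.injective (Eq.trans hy hx.symm)⟩, fun y hy => ?_⟩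
  replace hy : f y = 0 := hy
  exact ⟨hmono.lt_iff_lt.1 (hy ▸ hf_left), hmono.lt_iff_lt.1 (hy ▸ hf_right)⟩
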